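/- Let G be a finite subgroup of the orthogonal group O_n(ℝ) and let H be a subgroup of G. Let φ: ℝ[X]^G → ℝ be a ring homomorphism such that φ(∑_{j=1}^n (∂f/∂X_j)²) ≥ 0 for every f ∈ ℝ[X]^G, and suppose φ extends to a ring homomorphism φ_H: ℝ[X]^H → ℝ (i.e., φ_H(f) = φ(f) for all f ∈ ℝ[X]^G). Then φ_H(∑_{j=1}^n (∂h/∂X_j)²) ≥ 0 for every h ∈ ℝ[X]^H. -/

import Mathlib

open MvPolynomial

/-- The action of `σ ∈ GL_n(ℝ)` on real polynomials, `(σ · p)(x) = p(σ⁻¹ x)`,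
given by substituting `X i ↦ ∑ j (σ⁻¹)_{i j} X j`. -/
noncomputable def polyAct {n : ℕ} (σ : Matrix.GeneralLinearGroup (Fin n) ℝ) :
    MvPolynomial (Fin n) ℝ →ₐ[ℝ] MvPolynomial (Fin n) ℝ :=
  aeval fun i => ∑ j, (σ⁻¹).val i j • X j

/-- The subalgebra `ℝ[X]^G` of `G`-invariant polynomials. -/
noncomputable def invariants {n : ℕ} (G : Subgroup (Matrix.GeneralLinearGroup (Fin n) ℝ)) :
    Subalgebra ℝ (MvPolynomial (Fin n) ℝ) where
  carrier := {p | ∀ σ ∈ G, polyAct σ p = p}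
  mul_mem' := fun hp hq σ hσ => by rw [map_mul, hp σ hσ, hq σ hσ]
  one_mem' := fun σ _ => map_one (polyAct σ)
  add_mem' := fun hp hq σ hσ => by rw [map_add, hp σ hσ, hq σ hσ]
  zero_mem' := fun σ _ => map_zero (polyAct σ)
  algebraMap_mem' := fun r σ _ => (polyAct σ).commutes r

/-- The Reynolds operator `R_H(p) = (1/|H|) ∑_{σ ∈ H} σ · p` of a (finite) subgroup `H`. -/
noncomputable def reynolds {n : ℕ} (H : Subgroup (Matrix.GeneralLinearGroup (Fin n) ℝ))
    (p : MvPolynomial (Fin n) ℝ) : MvPolynomial (Fin n) ℝ :=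
  (Nat.card H : ℝ)⁻¹ • ∑ᶠ σ ∈ (H : Set (Matrix.GeneralLinearGroup (Fin n) ℝ)), polyAct σ p

/-- The polynomial `∑_{j=1}^n (∂f/∂X_j)²`. -/
noncomputable def gradSq {n : ℕ} (f : MvPolynomial (Fin n) ℝ) : MvPolynomial (Fin n) ℝ :=
  ∑ j, (pderiv j f) ^ 2

/-- Ring homomorphisms from `R` onto a field `K` extend along an integral extension `R ⊆ S`, with
values in any algebraically closed extension of `K`. -/
theorem exists_ringHom_extending_of_isIntegral {R S K L : Type*} [CommRing R] [CommRing S]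
    [Algebra R S] [Algebra.IsIntegral R S] [FaithfulSMul R S] [Field K] [Field L] [IsAlgClosed L]
    [Algebra K L] (φ : R →+* K) (hφ : Function.Surjective φ) :
    ∃ ψ : S →+* L, ∀ r, ψ (algebraMap R S r) = algebraMap K L (φ r) := by
  have : (RingHom.ker φ).IsMaximal := RingHom.ker_isMaximal_of_surjective φ hφ
  obtain ⟨M, hM, hMφ⟩ := Ideal.exists_ideal_over_maximal_of_isIntegral (S := S) (RingHom.ker φ)
    (by rw [(RingHom.injective_iff_ker_eq_bot _).1 (FaithfulSMul.algebraMap_injective R S)]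
        exact bot_le)
  let : Field (S ⧸ M) := Ideal.Quotient.field M
  let g : R →+* S ⧸ M := (Ideal.Quotient.mk M).comp (algebraMap R S)
  have hg : RingHom.ker φ ≤ RingHom.ker g := by
    intro r hr
    rw [← hMφ] at hr
    rw [RingHom.mem_ker]
    exact Ideal.Quotient.eq_zero_iff_mem.2 hr
  let ι : K →+* S ⧸ M := φ.liftOfSurjective hφ ⟨g, hg⟩
  have hι : ∀ r, ι (φ r) = g r := fun r =>
    φ.liftOfRightInverse_comp_apply _ (Function.rightInverse_surjInv hφ) ⟨g, hg⟩ r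
  let : Algebra K (S ⧸ M) := ι.toAlgebra
  have : Algebra.IsAlgebraic K (S ⧸ M) := by
    refine ⟨fun x => IsIntegral.isAlgebraic ?_⟩
    obtain ⟨s, rfl⟩ := Ideal.Quotient.mk_surjective x
    obtain ⟨p, hp, hs⟩ := Algebra.IsIntegral.isIntegral (R := R) s
    refine ⟨p.map φ, hp.map φ, ?_⟩
    rw [Polynomial.eval₂_map]
    have : (algebraMap K (S ⧸ M)).comp φ = (Ideal.Quotient.mk M).comp (algebraMap R S) :=
      RingHom.ext hι
    rw [this, ← Polynomial.hom_eval₂, hs, map_zero]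
  let θ : S ⧸ M →ₐ[K] L := IsAlgClosed.lift
  refine ⟨θ.toRingHom.comp (Ideal.Quotient.mk M), fun r => ?_⟩
  have := θ.commutes (φ r)
  rw [← this]
  exact congrArg θ (hι r).symm

/-- A real polynomial taking the value `i` at a nonreal `z`, the value `-i` at its conjugate, and
vanishing at all other points of a finite set. -/
theorem exists_real_polynomial_aeval_eq_I (S : Finset ℂ) {z : ℂ} (hz : z.im ≠ 0) :
    ∃ q : Polynomial ℝ, Polynomial.aeval z q = Complex.I ∧
      Polynomial.aeval (starRingEnd ℂ z) q = -Complex.I ∧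
      ∀ w ∈ S, w ≠ z → w ≠ starRingEnd ℂ z → Polynomial.aeval w q = 0 := by
  let T := S.filter fun w => w ≠ z ∧ w ≠ starRingEnd ℂ z
  let W : Polynomial ℝ := ∏ w ∈ T, (Polynomial.X ^ 2 - Polynomial.C (2 * w.re) * Polynomial.X
    + Polynomial.C (Complex.normSq w))
  have hW : ∀ x : ℂ, Polynomial.aeval x W = ∏ w ∈ T, ((x - w) * (x - starRingEnd ℂ w)) := by
    intro x
    simp only [W, map_prod]
    refine Finset.prod_congr rfl fun w _ => ?_
    have h1 := Complex.add_conj w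
    have h2 := Complex.mul_conj w
    simp only [map_add, map_sub, map_mul, map_pow, Polynomial.aeval_X, Polynomial.aeval_C,
      Complex.coe_algebraMap]
    push_cast at h1 ⊢
    linear_combination x * h1 - h2
  have hWz : Polynomial.aeval z W ≠ 0 := by
    rw [hW, Finset.prod_ne_zero_iff]
    intro w hw
    obtain ⟨-, h1, h2⟩ := Finset.mem_filter.1 hw
    refine mul_ne_zero (sub_ne_zero.2 h1.symm) (sub_ne_zero.2 fun h => h2 ?_)
    rw [h, Complex.conj_conj]
  let c : ℂ := Complex.I / Polynomial.aeval z W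
  let ℓ : Polynomial ℝ := Polynomial.C (c.im / z.im) * Polynomial.X
    + Polynomial.C (c.re - c.im / z.im * z.re)
  have hℓ : Polynomial.aeval z ℓ = c := by
    apply Complex.ext
    · simp [ℓ]
    · simp [ℓ]
      field_simp
  have hq : Polynomial.aeval z (ℓ * W) = Complex.I := by
    rw [map_mul, hℓ]
    exact div_mul_cancel₀ _ hWz
  refine ⟨ℓ * W, hq, ?_, fun w hw h1 h2 => ?_⟩
  · rw [Polynomial.aeval_conj, hq, Complex.conj_I]
  · rw [map_mul, hW, Finset.prod_eq_zero (i := w) (Finset.mem_filter.2 ⟨hw, h1, h2⟩) (by simp),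
      mul_zero]

theorem exists_derivative_eq (q : Polynomial ℝ) :
    ∃ p : Polynomial ℝ, Polynomial.derivative p = q := by
  induction q using Polynomial.induction_on' with
  | add p q hp hq =>
    obtain ⟨p, rfl⟩ := hp
    obtain ⟨q, rfl⟩ := hq
    exact ⟨p + q, map_add _ _ _⟩
  | monomial k a =>
    refine ⟨Polynomial.monomial (k + 1) (a / (k + 1)), ?_⟩
    rw [Polynomial.derivative_monomial]
    congr 1
    push_cast
    field_simp

section polyAct

variable {n : ℕ}

theorem polyAct_X (σ : Matrix.GeneralLinearGroup (Fin n) ℝ) (i : Fin n) :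
    polyAct σ (X i) = ∑ j, (σ⁻¹).val i j • X j := by
  rw [polyAct, aeval_X]

theorem polyAct_one (p : MvPolynomial (Fin n) ℝ) : polyAct 1 p = p := by
  have : polyAct (1 : Matrix.GeneralLinearGroup (Fin n) ℝ) = AlgHom.id ℝ _ := by
    ext1 i
    simp [polyAct_X, Matrix.one_apply]
  rw [this, AlgHom.id_apply]

theorem polyAct_mul (σ τ : Matrix.GeneralLinearGroup (Fin n) ℝ) (p : MvPolynomial (Fin n) ℝ) :
    polyAct (σ * τ) p = polyAct σ (polyAct τ p) := by
  have : polyAct (σ * τ) = (polyAct σ).comp (polyAct τ) := by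
    ext1 i
    simp only [AlgHom.comp_apply, polyAct_X, map_sum, map_smul, mul_inv_rev, Units.val_mul,
      Matrix.mul_apply, Finset.sum_smul, Finset.smul_sum, smul_smul]
    exact Finset.sum_comm
  rw [this, AlgHom.comp_apply]

theorem pderiv_polyAct_X (σ : Matrix.GeneralLinearGroup (Fin n) ℝ) (i j : Fin n) :
    pderiv j (polyAct σ (X i)) = C ((σ⁻¹).val i j) := by
  simp [polyAct_X, pderiv_X, Pi.single_apply, smul_eq_C_mul]

theorem pderiv_polyAct (σ : Matrix.GeneralLinearGroup (Fin n) ℝ) (j : Fin n)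
    (p : MvPolynomial (Fin n) ℝ) :
    pderiv j (polyAct σ p) = ∑ i, C ((σ⁻¹).val i j) * polyAct σ (pderiv i p) := by
  induction p using MvPolynomial.induction_on with
  | C a => simp [← algebraMap_eq]
  | add p q hp hq => simp only [map_add, hp, hq, mul_add, Finset.sum_add_distrib]
  | mul_X p k hp =>
    simp only [map_mul, pderiv_mul, hp, pderiv_polyAct_X, map_add, pderiv_X, mul_add,
      Finset.sum_add_distrib, Finset.sum_mul]
    congr 1
    · exact Finset.sum_congr rfl fun i _ => by ring
    · rw [Finset.sum_eq_single k]
      · simp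
        ring
      · intro i _ hi
        simp [hi.symm]
      · simp

theorem gradSq_polyAct {σ : Matrix.GeneralLinearGroup (Fin n) ℝ}
    (hσ : σ.val.transpose * σ.val = (1 : Matrix (Fin n) (Fin n) ℝ))
    (p : MvPolynomial (Fin n) ℝ) : gradSq (polyAct σ p) = polyAct σ (gradSq p) := by
  have hinv : (σ⁻¹).val = σ.val.transpose := by
    rw [Matrix.coe_units_inv]
    exact Matrix.inv_eq_left_inv hσ
  have horth : ∀ i k, ∑ j, (σ⁻¹).val i j * (σ⁻¹).val k j = if i = k then 1 else 0 := by
    intro i k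
    rw [hinv, ← Matrix.one_apply, ← hσ]
    rfl
  simp only [gradSq, pderiv_polyAct, map_sum, map_pow]
  simp only [sq, Finset.sum_mul_sum]
  rw [Finset.sum_comm]
  refine Finset.sum_congr rfl fun i _ => ?_
  rw [Finset.sum_comm]
  have : ∀ k, ∑ j, C ((σ⁻¹).val i j) * polyAct σ (pderiv i p) *
      (C ((σ⁻¹).val k j) * polyAct σ (pderiv k p)) =
      (C (if i = k then 1 else 0)) * (polyAct σ (pderiv i p) * polyAct σ (pderiv k p)) := by
    intro k
    rw [← horth, map_sum, Finset.sum_mul]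
    exact Finset.sum_congr rfl fun j _ => by rw [C_mul]; ring
  rw [Finset.sum_congr rfl fun k _ => this k]
  simp

theorem gradSq_mem_invariants {G : Subgroup (Matrix.GeneralLinearGroup (Fin n) ℝ)}
    (hO : ∀ σ ∈ G, σ.val.transpose * σ.val = (1 : Matrix (Fin n) (Fin n) ℝ))
    {f : MvPolynomial (Fin n) ℝ} (hf : f ∈ invariants G) : gradSq f ∈ invariants G :=
  fun σ hσ => by rw [← gradSq_polyAct (hO σ hσ), hf σ hσ]

theorem sum_polyAct_mem_invariants (G : Subgroup (Matrix.GeneralLinearGroup (Fin n) ℝ)) [Fintype G]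
    (p : MvPolynomial (Fin n) ℝ) : ∑ τ : G, polyAct τ.1 p ∈ invariants G := by
  intro σ hσ
  simp only [map_sum, ← polyAct_mul]
  exact Equiv.sum_comp (Equiv.mulLeft (⟨σ, hσ⟩ : G)) fun τ : G => polyAct τ.1 p

theorem isIntegral_invariants (G : Subgroup (Matrix.GeneralLinearGroup (Fin n) ℝ)) [Finite G] :
    Algebra.IsIntegral (invariants G) (MvPolynomial (Fin n) ℝ) := by
  let : MulSemiringAction G (MvPolynomial (Fin n) ℝ) :=
    { smul := fun σ p => polyAct σ.1 p
      one_smul := polyAct_one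
      mul_smul := fun σ τ => polyAct_mul σ.1 τ.1
      smul_zero := fun σ => map_zero (polyAct σ.1)
      smul_add := fun σ => map_add (polyAct σ.1)
      smul_one := fun σ => map_one (polyAct σ.1)
      smul_mul := fun σ => map_mul (polyAct σ.1) }
  have : Algebra.IsInvariant (invariants G) (MvPolynomial (Fin n) ℝ) G :=
    ⟨fun b hb => ⟨⟨b, fun σ hσ => hb ⟨σ, hσ⟩⟩, rfl⟩⟩
  exact Algebra.IsInvariant.isIntegral (invariants G) (MvPolynomial (Fin n) ℝ) G

/-- A complex point at which `∑ⱼ(∂f/∂Xⱼ)²` has nonnegative real part for all `f ∈ ℝ[X]^G` is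
real. -/
theorem im_eq_zero_of_gradSq_nonneg (G : Subgroup (Matrix.GeneralLinearGroup (Fin n) ℝ)) [Finite G]
    (ψ : MvPolynomial (Fin n) ℝ →ₐ[ℝ] ℂ)
    (hψ : ∀ f ∈ invariants G, 0 ≤ (ψ (gradSq f)).re) (k : Fin n) : (ψ (X k)).im = 0 := by
  classical
  have := Fintype.ofFinite G
  by_contra hz
  set z := ψ (X k) with hzdef
  let Λ : G → ℂ := fun τ => ψ (polyAct τ.1 (X k))
  let c : G → Fin n → ℝ := fun τ j => (τ.1⁻¹).val k j
  obtain ⟨q, hq1, hq2, hq3⟩ := exists_real_polynomial_aeval_eq_I (Finset.univ.image Λ) hz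
  obtain ⟨P, rfl⟩ := exists_derivative_eq q
  let s : G → ℝ := fun τ => if Λ τ = z then 1 else if Λ τ = starRingEnd ℂ z then -1 else 0
  have hs : ∀ τ, Polynomial.aeval (Λ τ) (Polynomial.derivative P) = Complex.I * s τ := by
    intro τ
    by_cases h1 : Λ τ = z
    · simp [s, h1, hq1]
    by_cases h2 : Λ τ = starRingEnd ℂ z
    · have h3 : starRingEnd ℂ z ≠ z := h2 ▸ h1
      simp [s, h2, h3, hq2]
    · simp [s, h1, h2, hq3 _ (Finset.mem_image_of_mem Λ (Finset.mem_univ τ)) h1 h2]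
  let d : Fin n → ℝ := fun j => ∑ τ, s τ * c τ j
  let f := ∑ τ : G, polyAct τ.1 (Polynomial.aeval (X k) P)
  have hgrad : ∀ j, ψ (pderiv j f) = Complex.I * d j := by
    intro j
    simp only [f, d, map_sum, Complex.ofReal_sum, Complex.ofReal_mul, Finset.mul_sum]
    refine Finset.sum_congr rfl fun τ _ => ?_
    rw [← Polynomial.aeval_algHom_apply, Derivation.map_aeval, pderiv_polyAct_X, smul_eq_mul,
      map_mul, ← Polynomial.aeval_algHom_apply, hs, ← algebraMap_eq, AlgHom.commutes, mul_assoc]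
    rfl
  have hsum : ψ (gradSq f) = ((-∑ j, d j ^ 2 : ℝ) : ℂ) := by
    simp [gradSq, hgrad, mul_pow]
  have hd : ∀ j, d j = 0 := by
    have h0 := hψ f (sum_polyAct_mem_invariants G _)
    rw [hsum, Complex.ofReal_re] at h0
    have h1 : ∑ j, d j ^ 2 = 0 :=
      le_antisymm (by linarith) (Finset.sum_nonneg fun j _ => sq_nonneg _)
    rw [Finset.sum_eq_zero_iff_of_nonneg fun j _ => sq_nonneg _] at h1
    exact fun j => pow_eq_zero_iff two_ne_zero |>.1 (h1 j (Finset.mem_univ j))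
  have hΛ : ∀ τ, Λ τ = ∑ j, (c τ j : ℂ) * ψ (X j) := by
    intro τ
    simp [Λ, c, polyAct_X]
  have hzero : ∑ τ, (s τ : ℂ) * Λ τ = 0 := by
    have : ∑ τ, (s τ : ℂ) * Λ τ = ∑ j, (d j : ℂ) * ψ (X j) := by
      simp only [hΛ, d, Finset.mul_sum, Complex.ofReal_sum, Finset.sum_mul, Complex.ofReal_mul]
      rw [Finset.sum_comm]
      exact Finset.sum_congr rfl fun j _ => Finset.sum_congr rfl fun τ _ => by ring
    simp [this, hd]
  have him : ∑ τ, s τ * (Λ τ).im * z.im = 0 := by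
    have := congrArg Complex.im hzero
    simp only [Complex.im_sum, Complex.im_ofReal_mul, Complex.zero_im] at this
    rw [← Finset.sum_mul, this, zero_mul]
  have hnn : ∀ τ ∈ Finset.univ, 0 ≤ s τ * (Λ τ).im * z.im := by
    intro τ _
    by_cases h1 : Λ τ = z
    · simp [s, h1, mul_self_nonneg]
    by_cases h2 : Λ τ = starRingEnd ℂ z
    · have h3 : starRingEnd ℂ z ≠ z := h2 ▸ h1
      simp [s, h2, h3, mul_self_nonneg]
    · simp [s, h1, h2]
  have h1 := (Finset.sum_eq_zero_iff_of_nonneg hnn).1 him 1 (Finset.mem_univ _)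
  have hΛ1 : Λ 1 = z := by simp [Λ, polyAct_one, hzdef]
  simp [s, hΛ1, hz] at h1

end polyAct

/-- for `G ⊆ O_n(ℝ)` finite, `H ≤ G`, if `φ : ℝ[X]^G → ℝ` satisfies
`φ(∑ⱼ(∂f/∂Xⱼ)²) ≥ 0` for all `f ∈ ℝ[X]^G` and extends to `φ_H : ℝ[X]^H → ℝ`, then
`φ_H(∑ⱼ(∂h/∂Xⱼ)²) ≥ 0` for all `h ∈ ℝ[X]^H`. -/
theorem statement_5 {n : ℕ} (hn : 1 ≤ n)
    (G H : Subgroup (Matrix.GeneralLinearGroup (Fin n) ℝ)) [Finite G] (hHG : H ≤ G)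
    (hO : ∀ σ ∈ G, σ.val.transpose * σ.val = (1 : Matrix (Fin n) (Fin n) ℝ))
    (φ : invariants G →+* ℝ)
    (hpos : ∀ (f : MvPolynomial (Fin n) ℝ), f ∈ invariants G →
      ∀ (h : gradSq f ∈ invariants G), 0 ≤ φ ⟨gradSq f, h⟩)
    (φH : invariants H →+* ℝ)
    (hext : ∀ (f : MvPolynomial (Fin n) ℝ) (hfG : f ∈ invariants G) (hfH : f ∈ invariants H),
      φH ⟨f, hfH⟩ = φ ⟨f, hfG⟩) :
    ∀ (f : MvPolynomial (Fin n) ℝ), f ∈ invariants H →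
      ∀ (h : gradSq f ∈ invariants H), 0 ≤ φH ⟨gradSq f, h⟩ := by
  intro f hf h
  have : Finite H := Finite.of_injective _ (Subgroup.inclusion_injective hHG)
  have := isIntegral_invariants H
  have hreal : ∀ r : ℝ, φH (algebraMap ℝ (invariants H) r) = r := fun r =>
    congrArg (fun g : ℝ →+* ℝ => g r) (Subsingleton.elim (φH.comp (algebraMap ℝ (invariants H)))
      (RingHom.id ℝ))
  obtain ⟨ψ₀, hψ₀⟩ := exists_ringHom_extending_of_isIntegral
    (S := MvPolynomial (Fin n) ℝ) (L := ℂ) φH fun r => ⟨_, hreal r⟩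
  let ψ : MvPolynomial (Fin n) ℝ →ₐ[ℝ] ℂ :=
    { ψ₀ with
      commutes' := fun r => (hψ₀ (algebraMap ℝ (invariants H) r)).trans (by rw [hreal]) }
  have hψ : ∀ p (hp : p ∈ invariants H), ψ p = φH ⟨p, hp⟩ := fun p hp => hψ₀ ⟨p, hp⟩
  have hGH : invariants G ≤ invariants H := fun p hp σ hσ => hp σ (hHG hσ)
  have him := im_eq_zero_of_gradSq_nonneg G ψ fun g hg => by
    have hgG := gradSq_mem_invariants hO hg
    rw [hψ _ (hGH hgG), Complex.ofReal_re, hext _ hgG]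
    exact hpos g hg hgG
  have hψreal : ψ = Complex.ofRealAm.comp (aeval fun k => (ψ (X k)).re) := by
    ext1 k
    apply Complex.ext <;> simp [him]
  have hsum : ψ (gradSq f) = ((∑ j, (aeval (fun k => (ψ (X k)).re) (pderiv j f)) ^ 2 : ℝ) : ℂ) := by
    rw [hψreal]
    simp [gradSq]
  rw [hψ _ h, Complex.ofReal_inj] at hsum
  rw [hsum]
  exact Finset.sum_nonneg fun j _ => sq_nonneg _
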